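/- arXiv:2302.04266 — 2 statements merged into one kernel-verified Lean document; each statement's English description precedes it below -/
import Mathlib

section
/- There exists a constant C > 0, depending only on N, Ω, s, q and α, such that F(u) ≥ (1/4)[u]_s^2 − C for every u ∈ A. -/
/-!
The proof rests on a fractional Poincaré inequality `κ ∫_Ω u² ≤ [u]_s²`. It is obtained by
restricting the double integral to `Ω × K`, where `K` is a fixed ball
disjoint from `Ω`: there `u(y) = 0` and `|x - y|` is bounded, so the integrand is at least
a constant times `u(x)²` (`poincare`). As `q < 2`, for every `δ > 0` one has `t^q ≤ δ t² + M`
(`rpow_le_sq_add`); hence `∫_Ω |u|^q ≤ (δ/κ) [u]_s² + M |Ω|`, and a suitable choice of `δ` absorbs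
the power term into a quarter of the seminorm.
-/


open MeasureTheory ENNReal Filter

noncomputable section

/-- Euclidean space `ℝ^N`. -/
abbrev E (N : ℕ) : Type := EuclideanSpace ℝ (Fin N)

/-- The squared Gagliardo seminorm `[u]_s^2`, valued in `[0,∞]`. -/
def gagSq (N : ℕ) (s : ℝ) (u : E N → ℝ) : ℝ≥0∞ :=
  ∫⁻ x : E N, ∫⁻ y : E N,
    ENNReal.ofReal ((u x - u y) ^ 2 / dist x y ^ ((N : ℝ) + 2 * s))

/-- The admissible class `A`: measurable functions vanishing a.e. outside `Ω`,
with finite Gagliardo seminorm and `|u|^q` integrable on `Ω`. -/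
def memA (N : ℕ) (s q : ℝ) (Ω : Set (E N)) (u : E N → ℝ) : Prop :=
  Measurable u ∧ (∀ᵐ x : E N, x ∉ Ω → u x = 0) ∧ gagSq N s u < ⊤ ∧
    IntegrableOn (fun x => |u x| ^ q) Ω

/-- The energy functional `F(u) = (1/2)[u]_s^2 − (α/q)∫_Ω |u|^q`. -/
def EF (N : ℕ) (s q α : ℝ) (Ω : Set (E N)) (u : E N → ℝ) : ℝ :=
  (1 / 2) * (gagSq N s u).toReal - (α / q) * ∫ x in Ω, |u x| ^ q

/-- The ground state level `Λ₁ = inf {F(u) : u ∈ A}`. -/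
def Lam1 (N : ℕ) (s q α : ℝ) (Ω : Set (E N)) : ℝ :=
  sInf {c : ℝ | ∃ u, memA N s q Ω u ∧ EF N s q α Ω u = c}

/-- A critical point of `F`: a weak solution of `(−Δ)^s u = α|u|^{q−2}u` in `Ω`. -/
def IsCritPt (N : ℕ) (s q α : ℝ) (Ω : Set (E N)) (u : E N → ℝ) : Prop :=
  memA N s q Ω u ∧ ∀ ψ : E N → ℝ, memA N s q Ω ψ →
    (∫ x : E N, ∫ y : E N,
        (u x - u y) * (ψ x - ψ y) / dist x y ^ ((N : ℝ) + 2 * s)) =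
      α * ∫ x in Ω, |u x| ^ (q - 2) * u x * ψ x

/-- A critical value of `F`. -/
def IsCritVal (N : ℕ) (s q α : ℝ) (Ω : Set (E N)) (c : ℝ) : Prop :=
  ∃ u, IsCritPt N s q α Ω u ∧ EF N s q α Ω u = c

/-- The first excited level `Λ₂ = inf {Λ > Λ₁ : Λ is a critical value of F}`. -/
def Lam2 (N : ℕ) (s q α : ℝ) (Ω : Set (E N)) : ℝ :=
  sInf {c : ℝ | Lam1 N s q α Ω < c ∧ IsCritVal N s q α Ω c}

/-- The cross term `I(u,v) = ∫∫ u(x)v(y)/|x−y|^{N+2s}` (valued in `[0,∞]`). -/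
def crossI (N : ℕ) (s : ℝ) (u v : E N → ℝ) : ℝ≥0∞ :=
  ∫⁻ x : E N, ∫⁻ y : E N,
    ENNReal.ofReal (u x * v y / dist x y ^ ((N : ℝ) + 2 * s))

/-- The metric of convergence in measure on `Ω`. -/
def d0 (N : ℕ) (Ω : Set (E N)) (u v : E N → ℝ) : ℝ :=
  ∫ x in Ω, min 1 |u x - v x|

/-- The power nonlinearity `Φ(t) = |t|^{m−1} t`. -/
def Phi (m t : ℝ) : ℝ := |t| ^ (m - 1) * t

/-- The nonlinearity `g(t) = |t|^{(m−1)/2} t`. -/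
def gfun (m t : ℝ) : ℝ := |t| ^ ((m - 1) / 2) * t

lemma rpow_le_sq_add {q δ : ℝ} (hq1 : 1 < q) (hq2 : q < 2) (hδ : 0 < δ) :
    ∃ M > (0:ℝ), ∀ t : ℝ, 0 ≤ t → t ^ q ≤ δ * t ^ 2 + M := by
  -- The threshold `T` solves `T ^ (q - 2) = δ`.
  set T : ℝ := δ ^ (q - 2)⁻¹ with hT
  have hT0 : 0 < T := Real.rpow_pos_of_pos hδ _
  have hTδ : T ^ (q - 2) = δ := Real.rpow_inv_rpow hδ.le (by linarith)
  refine ⟨T ^ q, Real.rpow_pos_of_pos hT0 _, fun t ht => ?_⟩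
  have hTq : 0 < T ^ q := Real.rpow_pos_of_pos hT0 _
  rcases le_total t T with h | h
  · have : t ^ q ≤ T ^ q := Real.rpow_le_rpow ht h (by linarith)
    nlinarith [mul_nonneg hδ.le (sq_nonneg t)]
  · have ht0 : 0 < t := hT0.trans_le h
    have h1 : t ^ (q - 2) ≤ δ := by
      rw [← hTδ]
      exact Real.rpow_le_rpow_of_nonpos hT0 h (by linarith)
    have h2 : t ^ q = t ^ (q - 2) * t ^ 2 := by
      rw [← Real.rpow_natCast t 2, ← Real.rpow_add ht0]
      norm_num
    rw [h2]
    nlinarith [mul_le_mul_of_nonneg_right h1 (sq_nonneg t)]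

/-- Fractional Poincaré inequality on a bounded set, for functions vanishing outside it. -/
lemma poincare (N : ℕ) (hN : 1 ≤ N) (Ω : Set (E N)) (hΩb : Bornology.IsBounded Ω)
    (hΩm : MeasurableSet Ω) (s : ℝ) (hs : 0 < s) :
    ∃ κ > (0:ℝ), ∀ u : E N → ℝ, (∀ᵐ x : E N, x ∉ Ω → u x = 0) →
      ENNReal.ofReal κ * ∫⁻ x in Ω, ENNReal.ofReal (u x ^ 2) ≤ gagSq N s u := by
  obtain ⟨R, hR, hΩR⟩ := hΩb.subset_ball_lt 0 0
  have : Nonempty (Fin N) := ⟨⟨0, hN⟩⟩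
  obtain ⟨c, hc⟩ := exists_norm_eq (E N) (show (0:ℝ) ≤ 3 * R by positivity)
  set K : Set (E N) := Metric.ball c R with hK
  have hKpos : 0 < volume K := Metric.measure_ball_pos _ _ hR
  have hKfin : volume K < ⊤ := measure_ball_lt_top
  set p : ℝ := (N : ℝ) + 2 * s with hp
  have hp0 : 0 < p := by positivity
  have hD : 0 < (5 * R) ^ p := by positivity
  have hKr : 0 < (volume K).toReal := ENNReal.toReal_pos hKpos.ne' hKfin.ne
  refine ⟨(volume K).toReal / (5 * R) ^ p, by positivity, fun u hu => ?_⟩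
  have hdist : ∀ x ∈ Ω, ∀ y ∈ K, y ∉ Ω ∧ 0 < dist x y ∧ dist x y ≤ 5 * R := by
    intro x hx y hy
    have hx' : ‖x‖ < R := by simpa using hΩR hx
    have hy' : dist y c < R := hy
    have h1 : ‖y - c‖ < R := by rwa [← dist_eq_norm]
    have h2 : ‖c‖ ≤ ‖y‖ + ‖y - c‖ := by
      have := norm_sub_le y (y - c)
      simpa using this
    have h3 : ‖y‖ ≤ ‖c‖ + ‖y - c‖ := by
      have := norm_add_le c (y - c)
      simpa using this
    have hyΩ : y ∉ Ω := fun h => by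
      have : ‖y‖ < R := by simpa using hΩR h
      linarith
    refine ⟨hyΩ, dist_pos.2 fun h => hyΩ (h ▸ hx), ?_⟩
    have := norm_sub_le x y
    rw [dist_eq_norm]
    linarith
  have key : ∀ x ∈ Ω, ENNReal.ofReal ((volume K).toReal / (5 * R) ^ p) * ENNReal.ofReal (u x ^ 2) ≤
      ∫⁻ y : E N, ENNReal.ofReal ((u x - u y) ^ 2 / dist x y ^ p) := by
    intro x hx
    calc _ = ∫⁻ _ in K, ENNReal.ofReal (u x ^ 2 / (5 * R) ^ p) := by
          rw [setLIntegral_const, ← ENNReal.ofReal_toReal hKfin.ne,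
            ← ENNReal.ofReal_mul (by positivity), ← ENNReal.ofReal_mul (by positivity),
            ENNReal.toReal_ofReal hKr.le]
          congr 1
          ring
      _ ≤ ∫⁻ y in K, ENNReal.ofReal ((u x - u y) ^ 2 / dist x y ^ p) := by
          apply lintegral_mono_ae
          filter_upwards [ae_restrict_of_ae hu, ae_restrict_mem measurableSet_ball] with y hy hyK
          obtain ⟨h1, h2, h3⟩ := hdist x hx y hyK
          rw [hy h1, sub_zero]
          gcongr
      _ ≤ _ := setLIntegral_le_lintegral _ _
  calc _ = ∫⁻ x in Ω, ENNReal.ofReal ((volume K).toReal / (5 * R) ^ p) *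
            ENNReal.ofReal (u x ^ 2) := (lintegral_const_mul' _ _ ENNReal.ofReal_ne_top).symm
    _ ≤ ∫⁻ x in Ω, ∫⁻ y : E N, ENNReal.ofReal ((u x - u y) ^ 2 / dist x y ^ p) :=
        setLIntegral_mono' hΩm key
    _ ≤ gagSq N s u := setLIntegral_le_lintegral _ _

/-- Coercivity: `F(u) ≥ (1/4)[u]_s² − C` on `A`, with `C` depending only on the data. -/
theorem coercivity (N : ℕ) (hN : 1 ≤ N) (Ω : Set (E N)) (hΩo : IsOpen Ω)
    (hΩb : Bornology.IsBounded Ω) (hΩn : Ω.Nonempty)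
    (s q α : ℝ) (hs : s ∈ Set.Ioo (0:ℝ) 1) (hq : q ∈ Set.Ioo (1:ℝ) 2) (hα : 0 < α) :
    ∃ C > (0:ℝ), ∀ u : E N → ℝ, memA N s q Ω u →
      EF N s q α Ω u ≥ (1 / 4) * (gagSq N s u).toReal - C := by
  obtain ⟨κ, hκ, hP⟩ := poincare N hN Ω hΩb hΩo.measurableSet s hs.1
  have hq0 : 0 < q := by linarith [hq.1]
  -- This `δ` satisfies `(α / q) * δ = κ / 4`.
  obtain ⟨M, hM, hY⟩ := rpow_le_sq_add hq.1 hq.2 (show 0 < q / α * (κ / 4) by positivity)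
  have hΩfin : volume Ω < ⊤ := hΩb.measure_lt_top
  refine ⟨α / q * (M * (volume Ω).toReal) + 1, by positivity, ?_⟩
  rintro u ⟨hum, hu0, hufin, huq⟩
  have hPu := hP u hu0
  have hLfin : ∫⁻ x in Ω, ENNReal.ofReal (u x ^ 2) ≠ ⊤ := by
    intro h
    rw [h, ENNReal.mul_top (by simpa using hκ)] at hPu
    exact hufin.not_ge hPu
  have hsq : IntegrableOn (fun x => u x ^ 2) Ω :=
    (lintegral_ofReal_ne_top_iff_integrable (by fun_prop)
      (Eventually.of_forall fun x => sq_nonneg (u x))).1 hLfin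
  have hPr : κ * ∫ x in Ω, u x ^ 2 ≤ (gagSq N s u).toReal := by
    rw [integral_eq_lintegral_of_nonneg_ae (Eventually.of_forall fun x => sq_nonneg (u x))
      (by fun_prop)]
    have := ENNReal.toReal_mono hufin.ne hPu
    rwa [ENNReal.toReal_mul, ENNReal.toReal_ofReal hκ.le] at this
  have hconst : IntegrableOn (fun _ : E N => M) Ω := integrableOn_const hΩfin.ne
  have hI : ∫ x in Ω, |u x| ^ q ≤
      q / α * (κ / 4) * (∫ x in Ω, u x ^ 2) + M * (volume Ω).toReal := by
    calc ∫ x in Ω, |u x| ^ q ≤ ∫ x in Ω, (q / α * (κ / 4) * u x ^ 2 + M) := by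
          refine integral_mono huq ((hsq.const_mul _).add hconst) fun x => ?_
          simpa using hY |u x| (abs_nonneg _)
      _ = _ := by
          rw [integral_add (hsq.const_mul _) hconst, integral_const_mul, setIntegral_const]
          simp [Measure.real, mul_comm]
  have h2 : α / q * ∫ x in Ω, |u x| ^ q ≤
      κ / 4 * (∫ x in Ω, u x ^ 2) + α / q * (M * (volume Ω).toReal) := by
    refine (mul_le_mul_of_nonneg_left hI (by positivity)).trans_eq ?_
    field_simp
  unfold EF
  linarith
end
end

section
/- Assume Λ₂ > Λ₁. Then there exists a sign-changing function φ ∈ A (i.e. both {x ∈ Ω : φ(x) > 0} and {x ∈ Ω : φ(x) < 0} have positive Lebesgue measure) such that Λ₁ < F(φ) < Λ₂. -/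
/-!
Sign-changing functions are never minimizers: `F(|φ|) < F(φ)` strictly when `φ` changes sign
(`gagSq_abs_lt`), so every sign-changing `φ ∈ A` has `F(φ) > Λ₁`, because the infimum is a genuine
one (`bddBelow_energy`, by a Poincaré inequality). It remains to find sign-changing functions with
energy arbitrarily close to `Λ₁`.

Testing with a small multiple of a cone gives `Λ₁ < 0` (`Lam1_neg`), so there is `u ≥ 0` in `A`
with `F(u) < min(Λ₂, 0)`. To make room for a negative bump, `u` is replaced by
`v = min(u, u(· + t e))` for a coordinate vector `e` and small `t > 0`; this `v` vanishes on the
part of `Ω` that the translation by `t e` moves out of `Ω`, and that part contains a ball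
(`exists_ball_translate_notMem`). The energy hardly increases (`exists_min_translate`):
submodularity gives `[min(u, u_h)]² + [max(u, u_h)]² ≤ 2 [u]²`, and by Fatou's lemma the second
term is asymptotically at least `[u]²`, since translates of `u` converge to `u` almost everywhere
along a sequence `h → 0`. This works for every `s ∈ (0,1)` and needs no regularity of `∂Ω`.

Finally `φ = v - τ w`, with `w` a cone supported in that ball and `τ > 0` small, is negative on
the ball, equals `v` elsewhere, and has energy below `Λ₂`; it is positive on a set of positive
measure because `F(v) < 0` excludes `v = 0`.
-/

open MeasureTheory ENNReal Filter

noncomputable section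

/-! ### The Gagliardo energy -/

theorem measurable_gagKernel (N : ℕ) (s : ℝ) {u : E N → ℝ} (hu : Measurable u) :
    Measurable (fun p : E N × E N =>
      ENNReal.ofReal ((u p.1 - u p.2) ^ 2 / dist p.1 p.2 ^ ((N : ℝ) + 2 * s))) := by
  fun_prop

theorem gagSq_eq_prod (N : ℕ) (s : ℝ) {u : E N → ℝ} (hu : Measurable u) :
    gagSq N s u = ∫⁻ p : E N × E N,
      ENNReal.ofReal ((u p.1 - u p.2) ^ 2 / dist p.1 p.2 ^ ((N : ℝ) + 2 * s)) :=
  (lintegral_prod _ (measurable_gagKernel N s hu).aemeasurable).symm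

theorem gagSq_mono {N : ℕ} {s : ℝ} {u v : E N → ℝ}
    (h : ∀ x y, (u x - u y) ^ 2 ≤ (v x - v y) ^ 2) : gagSq N s u ≤ gagSq N s v := by
  unfold gagSq
  gcongr ∫⁻ _, ∫⁻ _, ENNReal.ofReal (?_ / _)
  exact h _ _

theorem gagSq_abs_le {N : ℕ} {s : ℝ} (u : E N → ℝ) :
    gagSq N s (fun x => |u x|) ≤ gagSq N s u :=
  gagSq_mono fun _ _ => sq_le_sq.2 (abs_abs_sub_abs_le_abs_sub _ _)

/-- Passing to the absolute value strictly lowers the energy of a sign-changing function: the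
interaction between the positive and the negative part is strictly positive. -/
theorem gagSq_abs_lt {N : ℕ} {s : ℝ} {u : E N → ℝ} (hu : Measurable u)
    (hfin : gagSq N s u < ⊤) (hp : volume {x | 0 < u x} ≠ 0) (hn : volume {x | u x < 0} ≠ 0) :
    gagSq N s (fun x => |u x|) < gagSq N s u := by
  have hle := gagSq_abs_le (N := N) (s := s) u
  have hfin' := (hle.trans_lt hfin).ne
  rw [gagSq_eq_prod N s hu, gagSq_eq_prod N s hu.abs] at *
  refine lintegral_strict_mono_of_ae_le_of_ae_lt_on
    (measurable_gagKernel N s hu).aemeasurable hfin' (ae_of_all _ fun p => ?_)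
    (s := {x | 0 < u x} ×ˢ {x | u x < 0}) ?_ (ae_of_all _ ?_)
  · dsimp only
    gcongr ENNReal.ofReal (?_ / _)
    exact sq_le_sq.2 (abs_abs_sub_abs_le_abs_sub _ _)
  · rw [Measure.volume_eq_prod, Measure.prod_prod]
    exact mul_ne_zero hp hn
  · rintro ⟨x, y⟩ ⟨hx, hy⟩
    simp only [Set.mem_ofPred_eq] at hx hy ⊢
    have hxy : x ≠ y := by rintro rfl; linarith
    have hd : 0 < dist x y ^ ((N : ℝ) + 2 * s) := Real.rpow_pos_of_pos (dist_pos.2 hxy) _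
    have h0 : 0 < u x - u y := by linarith
    rw [ENNReal.ofReal_lt_ofReal_iff (by positivity), abs_of_pos hx, abs_of_neg hy]
    gcongr ?_ / _
    nlinarith

theorem gagSq_const_mul {N : ℕ} {s : ℝ} (u : E N → ℝ) (hu : Measurable u) (t : ℝ) :
    gagSq N s (fun x => t * u x) = ENNReal.ofReal (t ^ 2) * gagSq N s u := by
  rw [gagSq_eq_prod N s hu, gagSq_eq_prod N s (hu.const_mul t),
    ← lintegral_const_mul _ (measurable_gagKernel N s hu)]
  refine lintegral_congr fun p => ?_
  rw [← ENNReal.ofReal_mul (sq_nonneg t)]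
  congr 1
  ring

/-- Cauchy–Schwarz in the form `[v - t w]² ≤ (1 + t) [v]² + (t² + t) [w]²`. -/
theorem gagSq_sub_le {N : ℕ} {s : ℝ} {v w : E N → ℝ} (hv : Measurable v) (hw : Measurable w)
    {t : ℝ} (ht : 0 ≤ t) :
    gagSq N s (fun x => v x - t * w x) ≤
      ENNReal.ofReal (1 + t) * gagSq N s v + ENNReal.ofReal (t ^ 2 + t) * gagSq N s w := by
  have hvw : Measurable (fun x => v x - t * w x) := hv.sub (hw.const_mul t)
  rw [gagSq_eq_prod N s hv, gagSq_eq_prod N s hw, gagSq_eq_prod N s hvw,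
    ← lintegral_const_mul _ (measurable_gagKernel N s hv),
    ← lintegral_const_mul _ (measurable_gagKernel N s hw),
    ← lintegral_add_left ((measurable_gagKernel N s hv).const_mul _)]
  refine lintegral_mono fun p => ?_
  dsimp only
  have hd : 0 ≤ dist p.1 p.2 ^ ((N : ℝ) + 2 * s) := by positivity
  rw [← ENNReal.ofReal_mul (by positivity), ← ENNReal.ofReal_mul (by positivity),
    ← ENNReal.ofReal_add (by positivity) (by positivity)]
  apply ENNReal.ofReal_le_ofReal
  rw [← mul_div_assoc, ← mul_div_assoc, ← add_div]
  gcongr ?_ / _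
  nlinarith [mul_nonneg ht (sq_nonneg ((v p.1 - v p.2) + (w p.1 - w p.2)))]

theorem gagSq_translate {N : ℕ} {s : ℝ} (u : E N → ℝ) (h : E N) :
    gagSq N s (fun x => u (x + h)) = gagSq N s u := by
  have key : ∀ x, (∫⁻ y : E N, ENNReal.ofReal
      ((u (x + h) - u (y + h)) ^ 2 / dist x y ^ ((N : ℝ) + 2 * s))) =
      ∫⁻ y : E N, ENNReal.ofReal
        ((u (x + h) - u y) ^ 2 / dist (x + h) y ^ ((N : ℝ) + 2 * s)) := by
    intro x
    rw [← lintegral_add_right_eq_self (fun y : E N => ENNReal.ofReal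
        ((u (x + h) - u y) ^ 2 / dist (x + h) y ^ ((N : ℝ) + 2 * s))) h]
    simp only [dist_add_right]
  unfold gagSq
  simp only [key]
  exact lintegral_add_right_eq_self (fun x : E N => ∫⁻ y : E N, ENNReal.ofReal
        ((u x - u y) ^ 2 / dist x y ^ ((N : ℝ) + 2 * s))) h

/-- The pointwise inequality behind submodularity of the energy. -/
theorem min_max_sq_le (a b c d : ℝ) :
    (min a c - min b d) ^ 2 + (max a c - max b d) ^ 2 ≤ (a - b) ^ 2 + (c - d) ^ 2 := by
  rcases le_total a c with h | h <;> rcases le_total b d with h' | h' <;>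
    simp only [h, h', min_eq_left, min_eq_right, max_eq_left, max_eq_right] <;>
    nlinarith [mul_nonneg (sub_nonneg.2 h) (sub_nonneg.2 h')]

theorem gagSq_min_add_max_le {N : ℕ} {s : ℝ} {u v : E N → ℝ} (hu : Measurable u)
    (hv : Measurable v) :
    gagSq N s (fun x => min (u x) (v x)) + gagSq N s (fun x => max (u x) (v x)) ≤
      gagSq N s u + gagSq N s v := by
  rw [gagSq_eq_prod N s hu, gagSq_eq_prod N s hv, gagSq_eq_prod N s (hu.min hv),
    gagSq_eq_prod N s (hu.max hv),
    ← lintegral_add_left (measurable_gagKernel N s hu),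
    ← lintegral_add_left (measurable_gagKernel N s (hu.min hv))]
  refine lintegral_mono fun p => ?_
  dsimp only
  have hd : 0 ≤ dist p.1 p.2 ^ ((N : ℝ) + 2 * s) := by positivity
  rw [← ENNReal.ofReal_add (by positivity) (by positivity),
    ← ENNReal.ofReal_add (by positivity) (by positivity), ← add_div, ← add_div]
  gcongr ENNReal.ofReal (?_ / _)
  exact min_max_sq_le _ _ _ _

/-- Lower semicontinuity of the energy under almost everywhere convergence (Fatou). -/
theorem gagSq_le_liminf {N : ℕ} {s : ℝ} {u : E N → ℝ} {f : ℕ → E N → ℝ} (hu : Measurable u)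
    (hf : ∀ n, Measurable (f n))
    (hlim : ∀ᵐ x, Tendsto (fun n => f n x) atTop (nhds (u x))) :
    gagSq N s u ≤ liminf (fun n => gagSq N s (f n)) atTop := by
  simp only [gagSq_eq_prod N s hu, fun n => gagSq_eq_prod N s (hf n)]
  refine le_trans (le_of_eq ?_) (lintegral_liminf_le fun n => measurable_gagKernel N s (hf n))
  refine lintegral_congr_ae ?_
  have h1 : ∀ᵐ p : E N × E N, Tendsto (fun n => f n p.1) atTop (nhds (u p.1)) :=
    Measure.quasiMeasurePreserving_fst.ae hlim
  have h2 : ∀ᵐ p : E N × E N, Tendsto (fun n => f n p.2) atTop (nhds (u p.2)) :=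
    Measure.quasiMeasurePreserving_snd.ae hlim
  filter_upwards [h1, h2] with p hp1 hp2
  refine (Tendsto.liminf_eq ?_).symm
  exact ENNReal.tendsto_ofReal (((hp1.sub hp2).pow 2).div_const _)

/-! ### Translations -/

/-- Translates of an `L^q` function along a null sequence of vectors converge to it almost
everywhere, after passing to a subsequence. -/
theorem exists_translate_ae_tendsto {N : ℕ} {q : ℝ} (hq : 1 < q) {u : E N → ℝ}
    (hu : MemLp u (ENNReal.ofReal q) volume) {h : ℕ → E N} (hh : Tendsto h atTop (nhds 0)) :
    ∃ ns : ℕ → ℕ, StrictMono ns ∧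
      ∀ᵐ x, Tendsto (fun n => u (x + h (ns n))) atTop (nhds (u x)) := by
  have : Fact (1 ≤ ENNReal.ofReal q) := ⟨by simpa using hq.le⟩
  have : Fact (ENNReal.ofReal q ≠ ∞) := ⟨ENNReal.ofReal_ne_top⟩
  have hmp : ∀ n, MeasurePreserving (fun x : E N => h n +ᵥ x) volume volume := fun n =>
    measurePreserving_vadd (h n) volume
  have hcont : Tendsto (fun n => DomAddAct.mk (h n) +ᵥ hu.toLp u) atTop
      (nhds (DomAddAct.mk (0 : E N) +ᵥ hu.toLp u)) := by
    have := (DomAddAct.continuous_mk (M := E N)).tendsto 0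
    exact (this.comp hh).vadd tendsto_const_nhds
  have h0 : DomAddAct.mk (0 : E N) +ᵥ hu.toLp u = hu.toLp u := by
    simp
  rw [h0] at hcont
  simp only [DomAddAct.mk_vadd_toLp] at hcont
  rw [Lp.tendsto_Lp_iff_tendsto_eLpNorm''] at hcont
  have hm := tendstoInMeasure_of_tendsto_eLpNorm (zero_lt_one.trans_le Fact.out).ne'
    (fun n => (hu.comp_measurePreserving (hmp n)).1) hu.1 hcont
  obtain ⟨ns, hns, hae⟩ := hm.exists_seq_tendsto_ae
  refine ⟨ns, hns, ?_⟩
  filter_upwards [hae] with x hx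
  simpa [add_comm, Function.comp_def] using hx

/-! ### Boundedness from below -/

/-- Poincaré inequality on a bounded set: each point of `Ω` interacts with a fixed ball outside
`Ω`, where `u` vanishes. -/
theorem exists_poincare {N : ℕ} (hN : 1 ≤ N) {Ω : Set (E N)} (hΩm : MeasurableSet Ω)
    (hΩb : Bornology.IsBounded Ω) (s : ℝ) (hs : 0 < s) : ∃ c : ℝ, 0 < c ∧ ∀ u : E N → ℝ, Measurable u →
      (∀ᵐ x : E N, x ∉ Ω → u x = 0) →
      ENNReal.ofReal c * ∫⁻ x in Ω, ENNReal.ofReal (u x ^ 2) ≤ gagSq N s u := by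
  obtain ⟨R, hR, hΩR⟩ := hΩb.subset_ball_lt 0 0
  let i : Fin N := ⟨0, hN⟩
  let p : E N := EuclideanSpace.single i (2 * R)
  have hp : ‖p‖ = 2 * R := by simp [p, abs_of_pos hR]
  set B := Metric.ball p R with hB
  have hBΩ : ∀ y ∈ B, y ∉ Ω := by
    intro y hy hyΩ
    have h1 : dist y p < R := hy
    have h2 : dist y 0 < R := hΩR hyΩ
    have h3 := dist_triangle_left p 0 y
    rw [dist_zero_right, hp] at h3
    linarith
  have hdist : ∀ x ∈ Ω, ∀ y ∈ B, 0 < dist x y ∧ dist x y ≤ 4 * R := by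
    intro x hx y hy
    refine ⟨dist_pos.2 fun h => hBΩ y hy (h ▸ hx), ?_⟩
    have h1 : dist y p < R := hy
    have h2 : dist x 0 < R := hΩR hx
    have h3 := dist_triangle4 x 0 p y
    rw [dist_zero_left, hp, dist_comm p y] at h3
    linarith
  set e : ℝ := (N : ℝ) + 2 * s with he
  have he0 : 0 < e := by positivity
  have hV : 0 < (volume B).toReal :=
    ENNReal.toReal_pos (Metric.measure_ball_pos volume p hR).ne' measure_ball_lt_top.ne
  have hD : 0 < (4 * R) ^ e := by positivity
  refine ⟨(volume B).toReal / (4 * R) ^ e, by positivity, fun u hu hu0 => ?_⟩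
  calc ENNReal.ofReal ((volume B).toReal / (4 * R) ^ e) * ∫⁻ x in Ω, ENNReal.ofReal (u x ^ 2)
      = ∫⁻ x in Ω, ∫⁻ _ in B, ENNReal.ofReal (u x ^ 2 / (4 * R) ^ e) := by
        rw [← lintegral_const_mul _ (by fun_prop)]
        refine lintegral_congr fun x => ?_
        rw [setLIntegral_const, ← ENNReal.ofReal_mul (by positivity),
          ← ENNReal.ofReal_toReal (a := volume B) measure_ball_lt_top.ne,
          ← ENNReal.ofReal_mul (by positivity), ENNReal.ofReal_toReal measure_ball_lt_top.ne]
        congr 1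
        ring
    _ ≤ ∫⁻ x in Ω, ∫⁻ y in B, ENNReal.ofReal ((u x - u y) ^ 2 / dist x y ^ e) := by
        refine lintegral_mono_ae ?_
        refine ae_restrict_of_forall_mem hΩm fun x hx => ?_
        refine lintegral_mono_ae ((ae_restrict_iff' measurableSet_ball).2 ?_)
        filter_upwards [hu0] with y hy hyB
        rw [hy (hBΩ y hyB), sub_zero]
        have hd := hdist x hx y hyB
        have := Real.rpow_pos_of_pos hd.1 e
        gcongr
        exact hd.2
    _ ≤ gagSq N s u := by
        refine (setLIntegral_le_lintegral _ _).trans (lintegral_mono fun x => ?_)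
        exact setLIntegral_le_lintegral _ _

theorem exists_young {q : ℝ} (hq : q ∈ Set.Ioo (1:ℝ) 2) {a b : ℝ} (ha : 0 < a) (hb : 0 < b) :
    ∃ C : ℝ, 0 ≤ C ∧ ∀ t : ℝ, a * |t| ^ q ≤ b * t ^ 2 + C := by
  obtain ⟨hq1, hq2⟩ := hq
  have hlim : Tendsto (fun T : ℝ => a * T ^ (-(2 - q))) atTop (nhds (a * 0)) :=
    (tendsto_rpow_neg_atTop (by linarith)).const_mul a
  rw [mul_zero] at hlim
  obtain ⟨T, hT, hT0⟩ := ((hlim.eventually_lt_const hb).and (eventually_gt_atTop 0)).exists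
  refine ⟨a * T ^ q, by positivity, fun t => ?_⟩
  rcases le_total |t| T with h | h
  · have : a * |t| ^ q ≤ a * T ^ q := by gcongr
    nlinarith [sq_nonneg t]
  · have ht : 0 < |t| := hT0.trans_le h
    have h1 : |t| ^ (-(2 - q)) ≤ T ^ (-(2 - q)) :=
      Real.rpow_le_rpow_of_nonpos hT0 h (by linarith)
    have h2 : |t| ^ q = t ^ 2 * |t| ^ (-(2 - q)) := by
      rw [← sq_abs t, ← Real.rpow_natCast |t| 2, ← Real.rpow_add ht]
      congr 1
      push_cast
      ring
    have h3 : a * |t| ^ q ≤ t ^ 2 * (a * T ^ (-(2 - q))) := by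
      rw [h2]
      nlinarith [mul_le_mul_of_nonneg_left h1 (mul_nonneg ha.le (sq_nonneg t))]
    have h4 : t ^ 2 * (a * T ^ (-(2 - q))) ≤ t ^ 2 * b := by gcongr
    have : 0 ≤ a * T ^ q := by positivity
    linarith

theorem bddBelow_energy {N : ℕ} (hN : 1 ≤ N) {Ω : Set (E N)} (hΩo : IsOpen Ω)
    (hΩb : Bornology.IsBounded Ω) {s q α : ℝ} (hs : 0 < s) (hq : q ∈ Set.Ioo (1:ℝ) 2)
    (hα : 0 < α) : BddBelow {c : ℝ | ∃ u, memA N s q Ω u ∧ EF N s q α Ω u = c} := by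
  obtain ⟨c, hc, hP⟩ := exists_poincare hN hΩo.measurableSet hΩb s hs
  have hq0 : 0 < q := by linarith [hq.1]
  obtain ⟨C, hC, hY⟩ := exists_young hq (a := α / q) (b := c / 2) (by positivity) (by positivity)
  refine ⟨-(C * volume.real Ω), ?_⟩
  rintro _ ⟨u, ⟨hu, hu0, hfin, hint⟩, rfl⟩
  have hΩfin : volume Ω ≠ ⊤ := hΩb.measure_lt_top.ne
  have hP' := hP u hu hu0
  have hL : ∫⁻ x in Ω, ENNReal.ofReal (u x ^ 2) ≠ ⊤ := by
    intro h
    rw [h, ENNReal.mul_top (by simpa using hc)] at hP'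
    exact (hP'.trans_lt hfin).ne rfl
  have hsq : IntegrableOn (fun x => u x ^ 2) Ω := by
    refine ⟨by fun_prop, ?_⟩
    rw [hasFiniteIntegral_iff_ofReal (ae_of_all _ fun x => sq_nonneg _)]
    exact hL.lt_top
  have h1 : c * ∫ x in Ω, u x ^ 2 ≤ (gagSq N s u).toReal := by
    rw [integral_eq_lintegral_of_nonneg_ae (ae_of_all _ fun x => sq_nonneg _) (by fun_prop)]
    have := ENNReal.toReal_mono hfin.ne hP'
    rwa [ENNReal.toReal_mul, ENNReal.toReal_ofReal hc.le] at this
  have h2 : α / q * ∫ x in Ω, |u x| ^ q ≤ c / 2 * (∫ x in Ω, u x ^ 2) + C * volume.real Ω := by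
    calc α / q * ∫ x in Ω, |u x| ^ q = ∫ x in Ω, α / q * |u x| ^ q :=
          (integral_const_mul _ _).symm
      _ ≤ ∫ x in Ω, (c / 2 * u x ^ 2 + C) :=
          integral_mono (hint.const_mul _)
            ((hsq.const_mul _).add (integrableOn_const hΩfin)) fun x => hY (u x)
      _ = _ := by
          rw [integral_add (hsq.const_mul _) (integrableOn_const hΩfin), integral_const_mul,
            setIntegral_const, smul_eq_mul, mul_comm C]
  unfold EF
  linarith

/-! ### A compactly supported test function -/

/-- The cone of height and radius `r` over `x₀`. -/
def cone {N : ℕ} (x₀ : E N) (r : ℝ) (x : E N) : ℝ := max (r - dist x x₀) 0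

theorem measurable_cone {N : ℕ} (x₀ : E N) (r : ℝ) : Measurable (cone x₀ r) := by
  unfold cone
  fun_prop

theorem cone_nonneg {N : ℕ} (x₀ : E N) (r : ℝ) (x : E N) : 0 ≤ cone x₀ r x := le_max_right _ _

theorem cone_pos {N : ℕ} {x₀ : E N} {r : ℝ} {x : E N} (hx : x ∈ Metric.ball x₀ r) :
    0 < cone x₀ r x :=
  lt_max_of_lt_left (sub_pos.2 hx)

theorem cone_eq_zero {N : ℕ} {x₀ : E N} {r : ℝ} {x : E N} (hx : x ∉ Metric.ball x₀ r) :
    cone x₀ r x = 0 :=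
  max_eq_right (sub_nonpos.2 (not_lt.1 hx))

theorem cone_le {N : ℕ} {x₀ : E N} {r : ℝ} (hr : 0 ≤ r) (x : E N) : cone x₀ r x ≤ r :=
  max_le (sub_le_self _ dist_nonneg) hr

theorem abs_cone_sub_le {N : ℕ} (x₀ : E N) (r : ℝ) (x y : E N) :
    |cone x₀ r x - cone x₀ r y| ≤ dist x y := by
  refine (abs_max_sub_max_le_abs _ _ _).trans ?_ |>.trans (abs_dist_sub_le x y x₀)
  rw [abs_sub_comm (dist x x₀)]
  exact le_of_eq (by congr 1; ring)

/-- The radial profile `min(r², |z|²) / |z|^{N+2s}` is integrable: `s < 1` gives convergence at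
the origin and `s > 0` at infinity. -/
theorem lintegral_profile_lt_top {N : ℕ} (hN : 1 ≤ N) {s : ℝ} (hs : s ∈ Set.Ioo (0:ℝ) 1) (r : ℝ) :
    ∫⁻ z : E N, ENNReal.ofReal (min (r ^ 2) (‖z‖ ^ 2) / ‖z‖ ^ ((N : ℝ) + 2 * s)) < ⊤ := by
  obtain ⟨hs0, hs1⟩ := hs
  have : Nontrivial (E N) := by
    have : Nonempty (Fin N) := ⟨⟨0, hN⟩⟩
    infer_instance
  suffices h : Integrable (fun z : E N =>
      (fun y : ℝ => min (r ^ 2) (y ^ 2) / y ^ ((N : ℝ) + 2 * s)) ‖z‖) by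
    have h2 := h.2
    rwa [hasFiniteIntegral_iff_ofReal (ae_of_all _ fun z => by dsimp only; positivity)] at h2
  rw [integrable_fun_norm_addHaar volume
    (f := fun y : ℝ => min (r ^ 2) (y ^ 2) / y ^ ((N : ℝ) + 2 * s))]
  have hdim : Module.finrank ℝ (E N) = N := by simp
  rw [hdim]
  have hmeas : Measurable (fun y : ℝ =>
      y ^ (N - 1) • (min (r ^ 2) (y ^ 2) / y ^ ((N : ℝ) + 2 * s))) := by fun_prop
  have hpow : ∀ y : ℝ, 0 < y → y ^ (N - 1) / y ^ ((N : ℝ) + 2 * s) = y ^ (-1 - 2 * s) := by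
    intro y hy
    rw [← Real.rpow_natCast y (N - 1), ← Real.rpow_sub hy, Nat.cast_sub hN]
    congr 1
    push_cast
    ring
  rw [← Set.Ioc_union_Ioi_eq_Ioi (zero_le_one (α := ℝ)), integrableOn_union]
  constructor
  · have hI : IntegrableOn (fun y : ℝ => y ^ (1 - 2 * s)) (Set.Ioc 0 1) := by
      rw [← intervalIntegrable_iff_integrableOn_Ioc_of_le zero_le_one]
      exact intervalIntegral.intervalIntegrable_rpow' (by linarith)
    refine hI.mono' hmeas.aestronglyMeasurable
      ((ae_restrict_iff' measurableSet_Ioc).2 (ae_of_all _ fun y hy => ?_))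
    have hy0 : 0 < y := hy.1
    have h1 : y ^ (1 - 2 * s) = y ^ 2 * y ^ (-1 - 2 * s) := by
      rw [← Real.rpow_natCast y 2, ← Real.rpow_add hy0]
      congr 1
      push_cast
      ring
    rw [Real.norm_of_nonneg (by positivity), h1, ← hpow y hy0, smul_eq_mul]
    have h2 : min (r ^ 2) (y ^ 2) ≤ y ^ 2 := min_le_right _ _
    calc y ^ (N - 1) * (min (r ^ 2) (y ^ 2) / y ^ ((N : ℝ) + 2 * s))
        ≤ y ^ (N - 1) * (y ^ 2 / y ^ ((N : ℝ) + 2 * s)) := by gcongr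
      _ = _ := by ring
  · have hI : IntegrableOn (fun y : ℝ => r ^ 2 * y ^ (-1 - 2 * s)) (Set.Ioi 1) :=
      (integrableOn_Ioi_rpow_of_lt (by linarith) one_pos).const_mul _
    refine hI.mono' hmeas.aestronglyMeasurable
      ((ae_restrict_iff' measurableSet_Ioi).2 (ae_of_all _ fun y hy => ?_))
    have hy0 : 0 < y := zero_lt_one.trans hy
    rw [Real.norm_of_nonneg (by positivity), ← hpow y hy0, smul_eq_mul]
    have h2 : min (r ^ 2) (y ^ 2) ≤ r ^ 2 := min_le_left _ _
    calc y ^ (N - 1) * (min (r ^ 2) (y ^ 2) / y ^ ((N : ℝ) + 2 * s))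
        ≤ y ^ (N - 1) * (r ^ 2 / y ^ ((N : ℝ) + 2 * s)) := by gcongr
      _ = _ := by ring

theorem gagSq_cone_lt_top {N : ℕ} (hN : 1 ≤ N) {s : ℝ} (hs : s ∈ Set.Ioo (0:ℝ) 1) (x₀ : E N)
    {r : ℝ} (hr : 0 < r) : gagSq N s (cone x₀ r) < ⊤ := by
  set B := Metric.ball x₀ r with hB
  set k : E N → ℝ≥0∞ := fun z =>
    ENNReal.ofReal (min (r ^ 2) (‖z‖ ^ 2) / ‖z‖ ^ ((N : ℝ) + 2 * s)) with hk
  have hkm : Measurable k := by fun_prop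
  have hk_lt : ∫⁻ z, k z < ⊤ := lintegral_profile_lt_top hN hs r
  have hksub : ∀ x : E N, ∫⁻ y, k (x - y) = ∫⁻ z, k z := fun x =>
    lintegral_sub_left_eq_self k x
  have hksub' : ∀ y : E N, ∫⁻ x, k (x - y) = ∫⁻ z, k z := fun y =>
    lintegral_sub_right_eq_self k y
  set J : E N → ℝ≥0∞ := B.indicator 1 with hJ
  have hJm : Measurable J := measurable_one.indicator measurableSet_ball
  have hJi : ∫⁻ x, J x = volume B := by
    rw [hJ, lintegral_indicator_one measurableSet_ball]
  -- The difference vanishes unless one of the two points lies in the ball.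
  have hpt : ∀ x y, ENNReal.ofReal
      ((cone x₀ r x - cone x₀ r y) ^ 2 / dist x y ^ ((N : ℝ) + 2 * s)) ≤
      J x * k (x - y) + J y * k (x - y) := by
    intro x y
    have hle : ENNReal.ofReal
        ((cone x₀ r x - cone x₀ r y) ^ 2 / dist x y ^ ((N : ℝ) + 2 * s)) ≤ k (x - y) := by
      rw [hk]
      dsimp only
      rw [← dist_eq_norm]
      gcongr
      refine le_min (sq_le_sq.2 ?_) (sq_le_sq.2 ?_)
      · rw [abs_of_pos hr, abs_le]
        constructor <;>
        linarith [cone_nonneg x₀ r x, cone_nonneg x₀ r y, cone_le (x₀ := x₀) hr.le x,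
          cone_le (x₀ := x₀) hr.le y]
      · rw [abs_of_nonneg (dist_nonneg (x := x))]
        exact abs_cone_sub_le x₀ r x y
    by_cases hx : x ∈ B
    · have : J x = 1 := Set.indicator_of_mem hx _
      rw [this, one_mul]
      exact hle.trans le_self_add
    by_cases hy : y ∈ B
    · have : J y = 1 := Set.indicator_of_mem hy _
      rw [this, one_mul]
      exact hle.trans le_add_self
    · rw [cone_eq_zero hx, cone_eq_zero hy]
      simp
  have hprod1 : Measurable (fun p : E N × E N => J p.1 * k (p.1 - p.2)) := by fun_prop
  calc gagSq N s (cone x₀ r) ≤ ∫⁻ x, ∫⁻ y, (J x * k (x - y) + J y * k (x - y)) :=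
        lintegral_mono fun x => lintegral_mono fun y => hpt x y
    _ = (∫⁻ x, ∫⁻ y, J x * k (x - y)) + ∫⁻ x, ∫⁻ y, J y * k (x - y) := by
        rw [← lintegral_add_left hprod1.lintegral_prod_right']
        refine lintegral_congr fun x => lintegral_add_left (by fun_prop) _
    _ = (∫⁻ x, ∫⁻ y, J x * k (x - y)) + ∫⁻ y, ∫⁻ x, J y * k (x - y) := by
        congr 1
        refine lintegral_lintegral_swap (Measurable.aemeasurable ?_)
        simp only [Function.uncurry_def]
        fun_prop
    _ = volume B * (∫⁻ z, k z) + volume B * ∫⁻ z, k z := by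
        have e1 : ∀ x, ∫⁻ y, J x * k (x - y) = J x * ∫⁻ z, k z := fun x => by
          rw [lintegral_const_mul _ (by fun_prop), hksub]
        have e2 : ∀ y, ∫⁻ x, J y * k (x - y) = J y * ∫⁻ z, k z := fun y => by
          rw [lintegral_const_mul _ (by fun_prop), hksub']
        simp only [e1, e2]
        rw [lintegral_mul_const _ hJm, hJi]
    _ < ⊤ := by
        have : volume B < ⊤ := measure_ball_lt_top
        exact ENNReal.add_lt_top.2 ⟨ENNReal.mul_lt_top this hk_lt, ENNReal.mul_lt_top this hk_lt⟩

theorem memA_cone {N : ℕ} (hN : 1 ≤ N) {Ω : Set (E N)} {s q : ℝ} (hs : s ∈ Set.Ioo (0:ℝ) 1)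
    (hq : 0 < q) {x₀ : E N} {r : ℝ} (hr : 0 < r) (hB : Metric.ball x₀ r ⊆ Ω)
    (hΩb : Bornology.IsBounded Ω) : memA N s q Ω (cone x₀ r) := by
  have hm := measurable_cone x₀ r
  refine ⟨hm, ae_of_all _ fun x hx => cone_eq_zero fun h => hx (hB h),
    gagSq_cone_lt_top hN hs x₀ hr, ?_⟩
  refine (integrableOn_const (C := r ^ q) hΩb.measure_lt_top.ne).mono'
    (hm.abs.pow_const q).aestronglyMeasurable (ae_of_all _ fun x => ?_)
  rw [abs_of_nonneg (cone_nonneg x₀ r x), Real.norm_of_nonneg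
    (Real.rpow_nonneg (cone_nonneg x₀ r x) _)]
  exact Real.rpow_le_rpow (cone_nonneg x₀ r x) (cone_le hr.le x) hq.le

/-- The infimum is negative: since `q < 2`, the term of order `q` dominates the quadratic one
along `t ↦ t w` as `t → 0`. -/
theorem Lam1_neg {N : ℕ} (hN : 1 ≤ N) {Ω : Set (E N)} (hΩo : IsOpen Ω)
    (hΩb : Bornology.IsBounded Ω) (hΩn : Ω.Nonempty) {s q α : ℝ} (hs : s ∈ Set.Ioo (0:ℝ) 1)
    (hq : q ∈ Set.Ioo (1:ℝ) 2) (hα : 0 < α) : Lam1 N s q α Ω < 0 := by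
  have hq0 : 0 < q := by linarith [hq.1]
  obtain ⟨x₀, hx₀⟩ := hΩn
  obtain ⟨r, hr, hB⟩ := Metric.isOpen_iff.1 hΩo x₀ hx₀
  set w := cone x₀ r with hw
  obtain ⟨hwm, hw0, hwf, hwi⟩ := memA_cone hN hs hq0 hr hB hΩb
  have hI : 0 < ∫ x in Ω, |w x| ^ q := by
    rw [setIntegral_pos_iff_support_of_nonneg_ae (ae_of_all _ fun x => by positivity) hwi]
    refine (Metric.measure_ball_pos volume x₀ hr).trans_le (measure_mono fun x hx => ⟨?_, hB hx⟩)
    have : 0 < w x := cone_pos hx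
    exact (by positivity : 0 < |w x| ^ q).ne'
  set G := (gagSq N s w).toReal with hG
  set I := ∫ x in Ω, |w x| ^ q with hIdef
  have hlim : Tendsto (fun t : ℝ => 1 / 2 * t ^ (2 - q) * G) (nhdsWithin 0 (Set.Ioi 0))
      (nhds (1 / 2 * (0:ℝ) ^ (2 - q) * G)) := by
    have hc : ContinuousAt (fun t : ℝ => 1 / 2 * t ^ (2 - q) * G) 0 :=
      ((Real.continuousAt_rpow_const 0 (2 - q) (Or.inr (by linarith [hq.2]))).const_mul
        _).mul_const _
    exact hc.tendsto.mono_left nhdsWithin_le_nhds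
  rw [Real.zero_rpow (by linarith [hq.2]), mul_zero, zero_mul] at hlim
  obtain ⟨t, ht, ht0⟩ := ((hlim.eventually_lt_const
    (by positivity : 0 < α / q * I)).and self_mem_nhdsWithin).exists
  have ht0 : 0 < t := ht0
  have hpt : ∀ x, |t * w x| ^ q = t ^ q * |w x| ^ q := fun x => by
    rw [abs_mul, abs_of_pos ht0, Real.mul_rpow ht0.le (abs_nonneg _)]
  have hmem : memA N s q Ω (fun x => t * w x) := by
    refine ⟨hwm.const_mul t, hw0.mono fun x hx hxΩ => by simp [hw, hx hxΩ], ?_, ?_⟩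
    · rw [gagSq_const_mul w hwm]
      exact ENNReal.mul_lt_top ENNReal.ofReal_lt_top hwf
    · simp only [hpt]
      exact hwi.const_mul _
  refine (csInf_le (bddBelow_energy hN hΩo hΩb hs.1 hq hα) ⟨_, hmem, rfl⟩).trans_lt ?_
  unfold EF
  simp only [hpt]
  rw [gagSq_const_mul w hwm, ENNReal.toReal_mul, ENNReal.toReal_ofReal (sq_nonneg t),
    integral_const_mul, ← hG, ← hIdef]
  have h2 : t ^ 2 = t ^ q * t ^ (2 - q) := by
    rw [← Real.rpow_add ht0, ← Real.rpow_natCast t 2]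
    congr 1
    push_cast
    ring
  have h3 : 0 < t ^ q := by positivity
  rw [h2]
  nlinarith

/-! ### Clearing a neighbourhood of a boundary point -/

theorem memA_abs {N : ℕ} {Ω : Set (E N)} {s q : ℝ} {u : E N → ℝ} (hu : memA N s q Ω u) :
    memA N s q Ω (fun x => |u x|) := by
  obtain ⟨hm, h0, hf, hi⟩ := hu
  exact ⟨hm.abs, h0.mono fun x hx hxΩ => by simp [hx hxΩ], (gagSq_abs_le u).trans_lt hf,
    by simpa using hi⟩

theorem EF_abs_le {N : ℕ} {Ω : Set (E N)} {s q α : ℝ} {u : E N → ℝ} (hu : memA N s q Ω u) :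
    EF N s q α Ω (fun x => |u x|) ≤ EF N s q α Ω u := by
  unfold EF
  simp only [abs_abs]
  have := ENNReal.toReal_mono hu.2.2.1.ne (gagSq_abs_le u)
  linarith

theorem memLp_of_memA {N : ℕ} {Ω : Set (E N)} {s q : ℝ} (hq : 0 < q) {u : E N → ℝ}
    (hu : memA N s q Ω u) : MemLp u (ENNReal.ofReal q) volume := by
  obtain ⟨hm, h0, -, hi⟩ := hu
  rw [← integrable_norm_rpow_iff hm.aestronglyMeasurable (by simpa using hq)
    ENNReal.ofReal_ne_top, ENNReal.toReal_ofReal hq.le]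
  refine IntegrableOn.integrable_of_ae_notMem_eq_zero (s := Ω) (by simpa using hi) ?_
  filter_upwards [h0] with x hx hxΩ
  rw [hx hxΩ, norm_zero, Real.zero_rpow hq.ne']

/-- The infimum of a nonnegative function and one of its translates is admissible, and for
suitable small translations in a coordinate direction its energy is at most marginally larger.
Submodularity bounds the energy of the minimum by `2 [u]²` minus that of the maximum, and lower
semicontinuity bounds the latter from below by `[u]²` in the limit. -/
theorem exists_min_translate {N : ℕ} {Ω : Set (E N)} {s q α m : ℝ} (hq : 1 < q)
    {u : E N → ℝ} (hu : memA N s q Ω u) (hpos : ∀ x, 0 ≤ u x)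
    (hm : EF N s q α Ω u < m) (i : Fin N) :
    ∃ t : ℝ, 0 < t ∧ memA N s q Ω (fun x => min (u x) (u (x + EuclideanSpace.single i t))) ∧
      EF N s q α Ω (fun x => min (u x) (u (x + EuclideanSpace.single i t))) < m := by
  have hq0 : 0 < q := by linarith
  have hLp := memLp_of_memA hq0 hu
  obtain ⟨hum, hu0, huf, hui⟩ := hu
  have hh : Tendsto (fun n : ℕ => (EuclideanSpace.single i (1 / ((n : ℝ) + 1)) : E N)) atTop
      (nhds 0) := by
    rw [tendsto_zero_iff_norm_tendsto_zero]
    simp only [PiLp.norm_single]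
    exact tendsto_zero_iff_norm_tendsto_zero.1 tendsto_one_div_add_atTop_nhds_zero_nat
  obtain ⟨ns, -, hae⟩ := exists_translate_ae_tendsto hq hLp hh
  set t : ℕ → ℝ := fun n => 1 / ((ns n : ℝ) + 1) with ht
  set U : ℕ → E N → ℝ := fun n x => u (x + EuclideanSpace.single i (t n)) with hU
  have hUm : ∀ n, Measurable (U n) := fun n => hum.comp (measurable_add_const _)
  have hUlim : ∀ᵐ x, Tendsto (fun n => U n x) atTop (nhds (u x)) := hae
  have hUpos : ∀ n x, 0 ≤ U n x := fun n x => hpos _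
  set v : ℕ → E N → ℝ := fun n x => min (u x) (U n x) with hv
  have hvm : ∀ n, Measurable (v n) := fun n => hum.min (hUm n)
  have hvpos : ∀ n x, 0 ≤ v n x := fun n x => le_min (hpos x) (hUpos n x)
  have hvle : ∀ n x, |v n x| ^ q ≤ |u x| ^ q := fun n x => by
    rw [abs_of_nonneg (hvpos n x), abs_of_nonneg (hpos x)]
    exact Real.rpow_le_rpow (hvpos n x) (min_le_left _ _) hq0.le
  have hsub : ∀ n, gagSq N s (v n) + gagSq N s (fun x => max (u x) (U n x)) ≤
      gagSq N s u + gagSq N s u := fun n => by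
    have := gagSq_min_add_max_le (s := s) hum (hUm n)
    rwa [hU, gagSq_translate u] at this
  have h2fin : gagSq N s u + gagSq N s u < ⊤ := ENNReal.add_lt_top.2 ⟨huf, huf⟩
  have hvf : ∀ n, gagSq N s (v n) < ⊤ := fun n => (le_self_add.trans (hsub n)).trans_lt h2fin
  have hMf : ∀ n, gagSq N s (fun x => max (u x) (U n x)) < ⊤ := fun n =>
    (le_add_self.trans (hsub n)).trans_lt h2fin
  have hmem : ∀ n, memA N s q Ω (v n) := fun n => by
    refine ⟨hvm n, hu0.mono fun x hx hxΩ => ?_, hvf n, ?_⟩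
    · change min (u x) (U n x) = 0
      rw [hx hxΩ]
      exact min_eq_left (hUpos n x)
    · refine hui.mono' ((hvm n).abs.pow_const q).aestronglyMeasurable (ae_of_all _ fun x => ?_)
      rw [Real.norm_of_nonneg (by positivity)]
      exact hvle n x
  have hIlim : Tendsto (fun n => ∫ x in Ω, |v n x| ^ q) atTop (nhds (∫ x in Ω, |u x| ^ q)) := by
    refine tendsto_integral_of_dominated_convergence (fun x => |u x| ^ q)
      (fun n => ((hvm n).abs.pow_const q).aestronglyMeasurable) hui (fun n => ae_of_all _ fun x => ?_) ?_
    · rw [Real.norm_of_nonneg (by positivity)]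
      exact hvle n x
    · filter_upwards [ae_restrict_of_ae hUlim] with x hx
      have h1 : Tendsto (fun n => v n x) atTop (nhds (min (u x) (u x))) :=
        tendsto_const_nhds.min hx
      rw [min_self] at h1
      exact h1.abs.rpow_const (Or.inr hq0.le)
  have hfatou : gagSq N s u ≤ liminf (fun n => gagSq N s (fun x => max (u x) (U n x))) atTop := by
    refine gagSq_le_liminf hum (fun n => hum.max (hUm n)) ?_
    filter_upwards [hUlim] with x hx
    have h1 : Tendsto (fun n => max (u x) (U n x)) atTop (nhds (max (u x) (u x))) :=
      tendsto_const_nhds.max hx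
    rwa [max_self] at h1
  set δ := m - EF N s q α Ω u with hδ
  have hδ0 : 0 < δ := sub_pos.2 hm
  have hev1 : ∀ᶠ n in atTop, (gagSq N s (v n)).toReal < (gagSq N s u).toReal + δ := by
    have hev : ∀ᶠ n in atTop, (gagSq N s u).toReal - δ <
        (gagSq N s (fun x => max (u x) (U n x))).toReal := by
      rcases lt_or_ge ((gagSq N s u).toReal - δ) 0 with hneg | hnn
      · exact Eventually.of_forall fun n => hneg.trans_le ENNReal.toReal_nonneg
      · have hlt : ENNReal.ofReal ((gagSq N s u).toReal - δ) < gagSq N s u := by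
          rw [ENNReal.ofReal_lt_iff_lt_toReal hnn huf.ne]
          linarith
        refine (eventually_lt_of_lt_liminf (hlt.trans_le hfatou)).mono fun n hn => ?_
        exact (ENNReal.ofReal_lt_iff_lt_toReal hnn (hMf n).ne).1 hn
    filter_upwards [hev] with n hn
    have h1 := ENNReal.toReal_mono h2fin.ne (hsub n)
    rw [ENNReal.toReal_add (hvf n).ne (hMf n).ne, ENNReal.toReal_add huf.ne huf.ne] at h1
    linarith
  have hev2 : ∀ᶠ n in atTop, α / q * (∫ x in Ω, |u x| ^ q) - δ / 2 <
      α / q * ∫ x in Ω, |v n x| ^ q :=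
    (hIlim.const_mul (α / q)).eventually_const_lt (by linarith)
  obtain ⟨n, h1, h2⟩ := (hev1.and hev2).exists
  refine ⟨t n, by positivity, hmem n, ?_⟩
  change EF N s q α Ω (v n) < m
  have h3 : EF N s q α Ω u = m - δ := by rw [hδ]; ring
  unfold EF at h3 ⊢
  linarith

/-- A bounded nonempty open set contains a ball that a given coordinate translation moves out of
the set. -/
theorem exists_ball_translate_notMem {N : ℕ} {Ω : Set (E N)} (hΩo : IsOpen Ω)
    (hΩb : Bornology.IsBounded Ω) (hΩn : Ω.Nonempty) (i : Fin N) {t : ℝ} (ht : 0 < t) :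
    ∃ (x₀ : E N) (r : ℝ), 0 < r ∧ Metric.ball x₀ r ⊆ Ω ∧
      ∀ x ∈ Metric.ball x₀ r, x + EuclideanSpace.single i t ∉ Ω := by
  obtain ⟨R, hR⟩ := hΩb.exists_norm_le
  have hbdd : BddAbove ((fun x : E N => x i) '' Ω) := by
    refine ⟨R, ?_⟩
    rintro _ ⟨x, hx, rfl⟩
    exact (le_abs_self _).trans ((PiLp.norm_apply_le x i).trans (hR x hx))
  set M := sSup ((fun x : E N => x i) '' Ω) with hM
  obtain ⟨_, ⟨x₀, hx₀, rfl⟩, hlt⟩ := exists_lt_of_lt_csSup (hΩn.image _) (sub_lt_self M ht)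
  have hopen : IsOpen (Ω ∩ {x : E N | M - t < x i}) :=
    hΩo.inter (isOpen_lt continuous_const (by fun_prop))
  obtain ⟨r, hr, hB⟩ := Metric.isOpen_iff.1 hopen x₀ ⟨hx₀, hlt⟩
  refine ⟨x₀, r, hr, fun x hx => (hB hx).1, fun x hx hmem => ?_⟩
  have h1 : M - t < x i := (hB hx).2
  have h2 := le_csSup hbdd ⟨_, hmem, rfl⟩
  simp only [PiLp.add_apply, PiLp.single_apply, if_true] at h2
  linarith

/-- If there is a spectral gap, then there are sign-changing functions with
energy strictly between `Λ₁` and `Λ₂`. -/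
theorem sign_changing_in_gap (N : ℕ) (hN : 1 ≤ N) (Ω : Set (E N)) (hΩo : IsOpen Ω)
    (hΩb : Bornology.IsBounded Ω) (hΩn : Ω.Nonempty)
    (s q α : ℝ) (hs : s ∈ Set.Ioo (0:ℝ) 1) (hq : q ∈ Set.Ioo (1:ℝ) 2) (hα : 0 < α)
    (hgap : Lam1 N s q α Ω < Lam2 N s q α Ω) :
    ∃ φ : E N → ℝ, memA N s q Ω φ ∧
      0 < volume {x : E N | x ∈ Ω ∧ 0 < φ x} ∧
      0 < volume {x : E N | x ∈ Ω ∧ φ x < 0} ∧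
      Lam1 N s q α Ω < EF N s q α Ω φ ∧ EF N s q α Ω φ < Lam2 N s q α Ω := by
  obtain ⟨hq1, hq2⟩ := id hq
  have hq0 : 0 < q := by linarith
  have hbdd := bddBelow_energy hN hΩo hΩb hs.1 hq hα
  let i : Fin N := ⟨0, hN⟩
  have h0 : Lam1 N s q α Ω < min (Lam2 N s q α Ω) 0 :=
    lt_min hgap (Lam1_neg hN hΩo hΩb hΩn hs hq hα)
  have hne : {c : ℝ | ∃ u, memA N s q Ω u ∧ EF N s q α Ω u = c}.Nonempty :=
    ⟨_, fun _ => 0, ⟨measurable_const, by simp, by simp [gagSq], by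
      simp [Real.zero_rpow hq0.ne']⟩, rfl⟩
  obtain ⟨_, ⟨u₀, hu₀, rfl⟩, hlt⟩ := exists_lt_of_csInf_lt hne h0
  obtain ⟨t, ht, hv, hvlt⟩ := exists_min_translate hq1 (memA_abs hu₀) (fun _ => abs_nonneg _)
    ((EF_abs_le hu₀).trans_lt hlt) i
  set v : E N → ℝ := fun x => min |u₀ x| |u₀ (x + EuclideanSpace.single i t)| with hvdef
  have hvpos : ∀ x, 0 ≤ v x := fun x => le_min (abs_nonneg _) (abs_nonneg _)
  obtain ⟨x₀, r, hr, hBΩ, hBt⟩ := exists_ball_translate_notMem hΩo hΩb hΩn i ht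
  set B := Metric.ball x₀ r with hB
  have hv0 : ∀ᵐ x : E N, x ∈ B → v x = 0 := by
    have h1 : ∀ᵐ x : E N, x + EuclideanSpace.single i t ∉ Ω →
        u₀ (x + EuclideanSpace.single i t) = 0 :=
      (measurePreserving_add_right volume
        (EuclideanSpace.single i t : E N)).quasiMeasurePreserving.ae hu₀.2.1
    filter_upwards [h1] with x hx hxB
    change min |u₀ x| |u₀ (x + EuclideanSpace.single i t)| = 0
    rw [hx (hBt x hxB), abs_zero]
    exact min_eq_right (abs_nonneg _)
  obtain ⟨hvm, hvΩ, hvf, hvi⟩ := hv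
  obtain ⟨hwm, hwΩ, hwf, hwi⟩ := memA_cone (q := q) hN hs hq0 hr hBΩ hΩb
  set w := cone x₀ r with hw
  -- `v` is not almost everywhere zero, because its energy is negative.
  have hvI : 0 < ∫ x in Ω, |v x| ^ q := by
    have h1 : EF N s q α Ω v < 0 := hvlt.trans_le (min_le_right _ _)
    unfold EF at h1
    have h2 : 0 ≤ (gagSq N s v).toReal := ENNReal.toReal_nonneg
    have h3 : 0 < α / q * ∫ x in Ω, |v x| ^ q := by linarith
    exact pos_of_mul_pos_right h3 (by positivity)
  have hvsupp : 0 < volume {x : E N | x ∈ Ω ∧ 0 < v x} := by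
    rw [setIntegral_pos_iff_support_of_nonneg_ae (ae_of_all _ fun x => by positivity) hvi] at hvI
    refine hvI.trans_le (measure_mono fun x hx => ⟨hx.2, (hvpos x).lt_of_ne' fun h => hx.1 ?_⟩)
    simp [h, Real.zero_rpow hq0.ne']
  have hvL : EF N s q α Ω v < Lam2 N s q α Ω := hvlt.trans_le (min_le_left _ _)
  -- The bound of `gagSq_sub_le` is continuous in the size `τ` of the negative bump.
  have hlim : Tendsto (fun τ : ℝ => 1 / 2 * ((1 + τ) * (gagSq N s v).toReal +
      (τ ^ 2 + τ) * (gagSq N s w).toReal) - α / q * ∫ x in Ω, |v x| ^ q)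
      (nhdsWithin 0 (Set.Ioi 0)) (nhds (EF N s q α Ω v)) := by
    refine (Continuous.tendsto' (by fun_prop) 0 _ ?_).mono_left nhdsWithin_le_nhds
    unfold EF
    ring
  obtain ⟨τ, hτ, hτ0⟩ := ((hlim.eventually_lt_const hvL).and self_mem_nhdsWithin).exists
  have hτ0 : 0 < τ := hτ0
  set φ : E N → ℝ := fun x => v x - τ * w x with hφ
  have hφm : Measurable φ := hvm.sub (hwm.const_mul τ)
  have hφB : ∀ᵐ x : E N, x ∈ B → φ x = -(τ * w x) := by
    filter_upwards [hv0] with x hx hxB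
    change v x - τ * w x = _
    rw [hx hxB, zero_sub]
  have hφv : ∀ x : E N, x ∉ B → φ x = v x := fun x hx => by
    change v x - τ * w x = _
    rw [hw, cone_eq_zero hx, mul_zero, sub_zero]
  have hle := gagSq_sub_le (s := s) hvm hwm hτ0.le
  have hrhs : ENNReal.ofReal (1 + τ) * gagSq N s v +
      ENNReal.ofReal (τ ^ 2 + τ) * gagSq N s w < ⊤ :=
    ENNReal.add_lt_top.2 ⟨ENNReal.mul_lt_top ENNReal.ofReal_lt_top hvf,
      ENNReal.mul_lt_top ENNReal.ofReal_lt_top hwf⟩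
  have hφf : gagSq N s φ < ⊤ := hle.trans_lt hrhs
  have hφle : ∀ᵐ x : E N, |v x| ^ q ≤ |φ x| ^ q ∧ |φ x| ^ q ≤ |v x| ^ q + τ ^ q * |w x| ^ q := by
    filter_upwards [hv0, hφB] with x hx hx'
    have hz : (0 : ℝ) ^ q = 0 := Real.zero_rpow hq0.ne'
    by_cases hxB : x ∈ B
    · rw [hx hxB, hx' hxB, abs_zero, hz, abs_neg, abs_mul, abs_of_pos hτ0,
        Real.mul_rpow hτ0.le (abs_nonneg _), zero_add]
      exact ⟨by positivity, le_rfl⟩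
    · rw [hφv x hxB]
      exact ⟨le_rfl, le_add_of_nonneg_right (by positivity)⟩
  have hφi : IntegrableOn (fun x => |φ x| ^ q) Ω := by
    refine Integrable.mono' (hvi.add (hwi.const_mul (τ ^ q)))
      (hφm.abs.pow_const q).aestronglyMeasurable ?_
    filter_upwards [ae_restrict_of_ae hφle] with x hx
    rw [Real.norm_of_nonneg (by positivity)]
    exact hx.2
  have hφA : memA N s q Ω φ := by
    refine ⟨hφm, ?_, hφf, hφi⟩
    filter_upwards [hvΩ, hwΩ] with x h1 h2 hx
    change v x - τ * w x = 0
    rw [h1 hx, h2 hx, mul_zero, sub_zero]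
  have hpos : 0 < volume {x : E N | x ∈ Ω ∧ 0 < φ x} := by
    refine hvsupp.trans_le (measure_mono_ae ?_)
    filter_upwards [hv0] with x hx hxv
    refine ⟨hxv.1, ?_⟩
    rw [hφv x fun hxB => hxv.2.ne' (hx hxB)]
    exact hxv.2
  have hneg : 0 < volume {x : E N | x ∈ Ω ∧ φ x < 0} := by
    refine (Metric.measure_ball_pos volume x₀ hr).trans_le (measure_mono_ae ?_)
    filter_upwards [hφB] with x hx hxB
    refine ⟨hBΩ hxB, ?_⟩
    rw [hx hxB]
    exact neg_neg_of_pos (mul_pos hτ0 (cone_pos hxB))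
  refine ⟨φ, hφA, hpos, hneg, ?_, ?_⟩
  · refine (csInf_le hbdd ⟨_, memA_abs hφA, rfl⟩).trans_lt ?_
    have h1 := gagSq_abs_lt hφm hφf
      (hpos.trans_le (measure_mono fun x hx => hx.2)).ne'
      (hneg.trans_le (measure_mono fun x hx => hx.2)).ne'
    have h2 := ENNReal.toReal_strict_mono hφf.ne h1
    unfold EF
    simp only [abs_abs]
    linarith
  · refine lt_of_le_of_lt ?_ hτ
    have h1 := ENNReal.toReal_mono hrhs.ne hle
    rw [ENNReal.toReal_add (ENNReal.mul_lt_top ENNReal.ofReal_lt_top hvf).ne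
      (ENNReal.mul_lt_top ENNReal.ofReal_lt_top hwf).ne, ENNReal.toReal_mul, ENNReal.toReal_mul,
      ENNReal.toReal_ofReal (by positivity), ENNReal.toReal_ofReal (by positivity)] at h1
    have h2 : ∫ x in Ω, |v x| ^ q ≤ ∫ x in Ω, |φ x| ^ q :=
      integral_mono_ae hvi hφi ((ae_restrict_of_ae hφle).mono fun x hx => hx.1)
    have h3 := mul_le_mul_of_nonneg_left h2 (by positivity : 0 ≤ α / q)
    change 1 / 2 * (gagSq N s φ).toReal - _ ≤ _
    linarith
end
end
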